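/- Let A ∈ ℝ^{n×d} have full column rank with condition number κ(A) = σ_max(A)/σ_min(A), let b ∈ ℝⁿ, let j ≥ 0 be an integer, and define OPT = min_{x ∈ ℝ^d} ‖A(AᵀA)^j x − b‖₂. Let ε_final ∈ (0,0.1), ε₁ ≤ ε_final/10, and ε_even ≤ ε_final/κ(A). Suppose y' ∈ ℝ^d satisfies ‖Ay' − b‖₂ ≤ (1+ε₁)·min_{y ∈ ℝ^d} ‖Ay − b‖₂ and x' ∈ ℝ^d satisfies ‖(AᵀA)^j x' − y'‖₂ ≤ ε_even ‖y'‖₂. Then ‖A(AᵀA)^j x' − b‖₂ ≤ (1+ε_final)·OPT + ε_final·‖b‖₂. -/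

import Mathlib

open Matrix
open scoped BigOperators

/-- The Euclidean (`ℓ₂`) norm of a vector in `ℝ^n`. -/
noncomputable def vnorm {n : ℕ} (v : Fin n → ℝ) : ℝ :=
  Real.sqrt (∑ i, v i ^ 2)

/-- The minimum singular value `σ_min(A) = min_{‖x‖₂ = 1} ‖Ax‖₂`. -/
noncomputable def sigmaMin {n d : ℕ} (A : Matrix (Fin n) (Fin d) ℝ) : ℝ :=
  sInf {c : ℝ | ∃ x : Fin d → ℝ, vnorm x = 1 ∧ c = vnorm (A.mulVec x)}

/-- The maximum singular value (spectral / operator norm)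
`σ_max(A) = ‖A‖ = max_{‖x‖₂ = 1} ‖Ax‖₂`. -/
noncomputable def sigmaMax {n d : ℕ} (A : Matrix (Fin n) (Fin d) ℝ) : ℝ :=
  sSup {c : ℝ | ∃ x : Fin d → ℝ, vnorm x = 1 ∧ c = vnorm (A.mulVec x)}

/-- The condition number `κ(A) = σ_max(A) / σ_min(A)`. -/
noncomputable def kappa {n d : ℕ} (A : Matrix (Fin n) (Fin d) ℝ) : ℝ :=
  sigmaMax A / sigmaMin A

theorem vnorm_eq {n : ℕ} (v : Fin n → ℝ) : vnorm v = ‖WithLp.toLp 2 v‖ := by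
  simp [vnorm, EuclideanSpace.norm_eq]

theorem vnorm_nonneg {n : ℕ} (v : Fin n → ℝ) : 0 ≤ vnorm v := Real.sqrt_nonneg _

theorem vnorm_add {n : ℕ} (v w : Fin n → ℝ) : vnorm (v + w) ≤ vnorm v + vnorm w := by
  simp only [vnorm_eq, WithLp.toLp_add]
  exact norm_add_le _ _

theorem vnorm_smul {n : ℕ} (c : ℝ) (v : Fin n → ℝ) : vnorm (c • v) = |c| * vnorm v := by
  simp only [vnorm_eq, WithLp.toLp_smul, norm_smul, Real.norm_eq_abs]

theorem vnorm_eq_zero {n : ℕ} {v : Fin n → ℝ} (h : vnorm v = 0) : v = 0 := by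
  rw [vnorm_eq, norm_eq_zero] at h
  simpa using h

theorem vnorm_sq {n : ℕ} (v : Fin n → ℝ) : vnorm v ^ 2 = v ⬝ᵥ v := by
  rw [vnorm, Real.sq_sqrt (Finset.sum_nonneg fun i _ => sq_nonneg _)]
  simp [dotProduct, sq]

theorem dot_le {n : ℕ} (v w : Fin n → ℝ) : v ⬝ᵥ w ≤ vnorm v * vnorm w :=
  Real.sum_mul_le_sqrt_mul_sqrt _ _ _

open scoped Matrix.Norms.L2Operator in
theorem vnorm_bdd {n d : ℕ} (A : Matrix (Fin n) (Fin d) ℝ) :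
    ∃ C, ∀ x, vnorm (A.mulVec x) ≤ C * vnorm x := by
  refine ⟨‖A‖, fun x => ?_⟩
  simp only [vnorm_eq]
  exact Matrix.l2_opNorm_mulVec A (WithLp.toLp 2 x)

theorem vnorm_normalize {d : ℕ} (x : Fin d → ℝ) (hx : vnorm x ≠ 0) :
    vnorm ((vnorm x)⁻¹ • x) = 1 := by
  rw [vnorm_smul, abs_of_nonneg (inv_nonneg.2 (vnorm_nonneg x)), inv_mul_cancel₀ hx]

theorem vnorm_mulVec_normalize {n d : ℕ} (A : Matrix (Fin n) (Fin d) ℝ) (x : Fin d → ℝ) :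
    vnorm (A.mulVec ((vnorm x)⁻¹ • x)) = vnorm (A.mulVec x) / vnorm x := by
  rw [Matrix.mulVec_smul, vnorm_smul, abs_of_nonneg (inv_nonneg.2 (vnorm_nonneg x))]
  ring

theorem le_sigmaMax {n d : ℕ} (A : Matrix (Fin n) (Fin d) ℝ) (x : Fin d → ℝ) :
    vnorm (A.mulVec x) ≤ sigmaMax A * vnorm x := by
  obtain ⟨C, hC⟩ := vnorm_bdd A
  by_cases hx : vnorm x = 0
  · have := hC x
    rw [hx] at this ⊢
    simpa using this
  · have hp : 0 < vnorm x := lt_of_le_of_ne (vnorm_nonneg x) (Ne.symm hx)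
    rw [← div_le_iff₀ hp, ← vnorm_mulVec_normalize]
    refine le_csSup ⟨C, ?_⟩ ⟨_, vnorm_normalize x hx, rfl⟩
    rintro c ⟨z, hz, rfl⟩
    simpa [hz] using hC z

theorem sigmaMin_le {n d : ℕ} (A : Matrix (Fin n) (Fin d) ℝ) (x : Fin d → ℝ) :
    sigmaMin A * vnorm x ≤ vnorm (A.mulVec x) := by
  by_cases hx : vnorm x = 0
  · rw [hx, mul_zero]
    exact vnorm_nonneg _
  · have hp : 0 < vnorm x := lt_of_le_of_ne (vnorm_nonneg x) (Ne.symm hx)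
    rw [← le_div_iff₀ hp, ← vnorm_mulVec_normalize]
    refine csInf_le ⟨0, ?_⟩ ⟨_, vnorm_normalize x hx, rfl⟩
    rintro c ⟨z, hz, rfl⟩
    exact vnorm_nonneg _

theorem sigmaMax_nonneg {n d : ℕ} (A : Matrix (Fin n) (Fin d) ℝ) : 0 ≤ sigmaMax A := by
  apply Real.sSup_nonneg
  rintro c ⟨z, hz, rfl⟩
  exact vnorm_nonneg _

/-- The even-power step contributes at most `ε ‖A y'‖`. -/
theorem even_step {n d : ℕ} (A : Matrix (Fin n) (Fin d) ℝ) (e ε : ℝ) (hε : 0 < ε)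
    (he : e ≤ ε / kappa A) (y u : Fin d → ℝ) (hu : vnorm u ≤ e * vnorm y) :
    vnorm (A.mulVec u) ≤ ε * vnorm (A.mulVec y) := by
  have h1 := le_sigmaMax A u
  have h2 := sigmaMin_le A y
  have hM := sigmaMax_nonneg A
  have hy := vnorm_nonneg y
  have hAy := vnorm_nonneg (A.mulVec y)
  have h3 : vnorm u ≤ ε / kappa A * vnorm y :=
    hu.trans (mul_le_mul_of_nonneg_right he hy)
  by_cases hk : sigmaMax A = 0
  · rw [hk, zero_mul] at h1
    exact h1.trans (mul_nonneg hε.le hAy)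
  · have h4 : sigmaMax A * (ε / kappa A * vnorm y) = ε * (sigmaMin A * vnorm y) := by
      rw [kappa, div_div_eq_mul_div]
      field_simp
    calc _ ≤ sigmaMax A * vnorm u := h1
      _ ≤ sigmaMax A * (ε / kappa A * vnorm y) := mul_le_mul_of_nonneg_left h3 hM
      _ = ε * (sigmaMin A * vnorm y) := h4
      _ ≤ _ := mul_le_mul_of_nonneg_left h2 hε.le

/-- If `w - b` is nearly optimal along the line spanned by `w`, then `w` is not much longer
than `b`. -/
theorem near_opt {n : ℕ} (w b : Fin n → ℝ) (m : ℝ) (hm : 0 ≤ m)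
    (hopt : ∀ s : ℝ, m ≤ vnorm ((w - b) + s • w))
    (hr : vnorm (w - b) ≤ 1.01 * m) : vnorm w ≤ vnorm b + 0.2 * m := by
  set r := w - b with hrdef
  have hw := vnorm_nonneg w
  have hb := vnorm_nonneg b
  have hexp : ∀ s : ℝ, m ^ 2 ≤ vnorm r ^ 2 + 2 * s * (r ⬝ᵥ w) + s ^ 2 * vnorm w ^ 2 := by
    intro s
    have h := pow_le_pow_left₀ hm (hopt s) 2
    rw [vnorm_sq] at h
    simp only [add_dotProduct, dotProduct_add, smul_dotProduct, dotProduct_smul, smul_eq_mul,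
      dotProduct_comm w r] at h
    rw [vnorm_sq, vnorm_sq]
    linarith
  have hr2 : vnorm r ^ 2 ≤ 1.0201 * m ^ 2 := by
    have := pow_le_pow_left₀ (vnorm_nonneg r) hr 2
    nlinarith
  rcases hw.eq_or_lt with h0 | hpos
  · rw [← h0]
    positivity
  have hwb : vnorm w ^ 2 = w ⬝ᵥ b + r ⬝ᵥ w := by
    rw [vnorm_sq, hrdef, sub_dotProduct, dotProduct_comm b w]
    ring
  have hd := dot_le w b
  have hp : r ⬝ᵥ w ≤ 0.2 * m * vnorm w := by
    have h := hexp (-(r ⬝ᵥ w) / vnorm w ^ 2)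
    have hs : vnorm r ^ 2 + 2 * (-(r ⬝ᵥ w) / vnorm w ^ 2) * (r ⬝ᵥ w)
        + (-(r ⬝ᵥ w) / vnorm w ^ 2) ^ 2 * vnorm w ^ 2
        = vnorm r ^ 2 - (r ⬝ᵥ w) ^ 2 / vnorm w ^ 2 := by
      field_simp
      ring
    rw [hs] at h
    have h5 : (r ⬝ᵥ w) ^ 2 / vnorm w ^ 2 ≤ 0.04 * m ^ 2 := by nlinarith [sq_nonneg m]
    rw [div_le_iff₀ (by positivity)] at h5
    refine abs_le_of_sq_le_sq' (b := 0.2 * m * vnorm w) ?_ (by positivity) |>.2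
    linarith [h5, show (0.2 * m * vnorm w) ^ 2 = 0.04 * m ^ 2 * vnorm w ^ 2 by ring]
  nlinarith

/-- Error guarantee for the odd power regression
`min_x ‖A(AᵀA)^j x - b‖₂`, solved by first approximately solving `min_y ‖Ay - b‖₂`
(giving `y'`) and then the even power regression `min_x ‖(AᵀA)^j x - y'‖₂` (giving `x'`). -/
theorem odd_power_regression_error {n d : ℕ} (A : Matrix (Fin n) (Fin d) ℝ)
    (hrank : A.rank = d) (b : Fin n → ℝ) (j : ℕ)
    (ε₁ εeven εfinal : ℝ) (hεfinal : εfinal ∈ Set.Ioo (0 : ℝ) 0.1)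
    (hε₁ : ε₁ ≤ εfinal / 10) (hεeven : εeven ≤ εfinal / kappa A)
    (y' x' : Fin d → ℝ)
    (hy : vnorm (A.mulVec y' - b)
        ≤ (1 + ε₁) * sInf {c : ℝ | ∃ y : Fin d → ℝ, c = vnorm (A.mulVec y - b)})
    (hx : vnorm (((Aᵀ * A) ^ j).mulVec x' - y') ≤ εeven * vnorm y') :
    vnorm ((A * (Aᵀ * A) ^ j).mulVec x' - b)
      ≤ (1 + εfinal)
          * sInf {c : ℝ | ∃ x : Fin d → ℝ, c = vnorm ((A * (Aᵀ * A) ^ j).mulVec x - b)}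
        + εfinal * vnorm b := by
  obtain ⟨hε0, hε1⟩ := hεfinal
  set m := sInf {c : ℝ | ∃ y : Fin d → ℝ, c = vnorm (A.mulVec y - b)} with hmdef
  have hm : 0 ≤ m := by
    apply Real.sInf_nonneg
    rintro c ⟨z, rfl⟩
    exact vnorm_nonneg _
  have hmle : ∀ y : Fin d → ℝ, m ≤ vnorm (A.mulVec y - b) := by
    intro y
    refine csInf_le ⟨0, ?_⟩ ⟨y, rfl⟩
    rintro c ⟨z, rfl⟩
    exact vnorm_nonneg _
  have hopt : m ≤ sInf {c : ℝ | ∃ x : Fin d → ℝ,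
      c = vnorm ((A * (Aᵀ * A) ^ j).mulVec x - b)} := by
    refine le_csInf ⟨_, 0, rfl⟩ ?_
    rintro c ⟨z, rfl⟩
    rw [← Matrix.mulVec_mulVec]
    exact hmle _
  have hstep := even_step A εeven εfinal hε0 hεeven y' _ hx
  have hw : vnorm (A.mulVec y') ≤ vnorm b + 0.2 * m := by
    refine near_opt _ b m hm (fun s => ?_) ?_
    · have h := hmle ((1 + s) • y')
      have e : A.mulVec ((1 + s) • y') - b = (A.mulVec y' - b) + s • A.mulVec y' := by
        rw [Matrix.mulVec_smul, add_smul, one_smul]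
        abel
      rwa [e] at h
    · refine hy.trans (mul_le_mul_of_nonneg_right ?_ hm)
      norm_num at hε1 ⊢
      linarith
  have htri : vnorm ((A * (Aᵀ * A) ^ j).mulVec x' - b)
      ≤ vnorm (A.mulVec (((Aᵀ * A) ^ j).mulVec x' - y')) + vnorm (A.mulVec y' - b) := by
    have e : (A * (Aᵀ * A) ^ j).mulVec x' - b
        = A.mulVec (((Aᵀ * A) ^ j).mulVec x' - y') + (A.mulVec y' - b) := by
      rw [Matrix.mulVec_sub, Matrix.mulVec_mulVec]
      abel
    rw [e]
    exact vnorm_add _ _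
  have h1 := mul_le_mul_of_nonneg_left hw hε0.le
  have h2 := mul_le_mul_of_nonneg_right hε₁ hm
  have h3 := mul_le_mul_of_nonneg_left hopt (by linarith : 0 ≤ 1 + εfinal)
  have h4 := mul_nonneg hε0.le hm
  nlinarith
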